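/- For every t ∈ ℕ and every z ∈ [0, 2^{t+1}], ∫₀¹ |g_t(z + α·2^{t+1}) − g_t(α·2^{t+1})| dα = (2^{t+1} − z)·z / 2^{t+1}. -/

import Mathlib

open MeasureTheory

/-- The sawtooth function `g_t(x) = 2^t - |x - (⌊x/2^{t+1}⌋·2^{t+1} + 2^t)|`. -/
noncomputable def sawtooth (t : ℕ) (x : ℝ) : ℝ :=
  2 ^ t - |x - ((⌊x / 2 ^ (t + 1)⌋ : ℝ) * 2 ^ (t + 1) + 2 ^ t)|

/-! The sawtooth `g_t` is the distance to the nearest multiple of `p = 2 ^ (t + 1)`, that is, the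
norm of the circle `ℝ / pℤ`. As on the real line, `|‖x‖ - ‖y‖| = min ‖x + y‖ ‖x - y‖` there, so the
integrand `|‖z + x‖ - ‖x‖|` equals `min ‖z + 2x‖ ‖z‖`. Doubling and translation preserve the measure
of the circle, which leaves the integral of `min ‖x‖ ‖z‖`: the area under a truncated tent. -/

lemma abs_abs_sub_abs_eq_min {α : Type*} [AddCommGroup α] [LinearOrder α] [IsOrderedAddMonoid α]
    (a b : α) : |(|a| - |b|)| = min |a + b| |a - b| := by
  grind

lemma integral_comp_of_measurePreserving {α β E : Type*} [MeasurableSpace α] [MeasurableSpace β]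
    [NormedAddCommGroup E] [NormedSpace ℝ E] {μ : Measure α} {ν : Measure β} {φ : α → β}
    (hφ : MeasurePreserving φ μ ν) {f : β → E} (hf : AEStronglyMeasurable f ν) :
    ∫ x, f (φ x) ∂μ = ∫ y, f y ∂ν := by
  obtain ⟨hmeas, rfl⟩ := hφ
  exact (integral_map hmeas.aemeasurable hf).symm

lemma integral_min_abs {b c : ℝ} (hc : 0 ≤ c) (hcb : c ≤ b) :
    ∫ x in -b..b, min |x| c = c * (2 * b - c) := by
  have hint (u v : ℝ) : IntervalIntegrable (fun x : ℝ ↦ min |x| c) volume u v :=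
    Continuous.intervalIntegrable (by fun_prop) u v
  have heven : ∫ x in -b..0, min |x| c = ∫ x in 0..b, min |x| c := by
    simpa using (intervalIntegral.integral_comp_neg (fun x : ℝ ↦ min |x| c) (a := -b) (b := 0))
  have hramp : ∫ x in 0..c, min |x| c = c ^ 2 / 2 := by
    rw [intervalIntegral.integral_congr (g := fun x ↦ x), integral_id]
    · ring
    · intro x hx
      rw [Set.uIcc_of_le hc] at hx
      simp [abs_of_nonneg hx.1, hx.2]
  have hplateau : ∫ x in c..b, min |x| c = (b - c) * c := by
    rw [intervalIntegral.integral_congr (g := fun _ ↦ c), intervalIntegral.integral_const,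
      smul_eq_mul]
    intro x hx
    rw [Set.uIcc_of_le hcb] at hx
    exact min_eq_right (hx.1.trans (le_abs_self x))
  rw [← intervalIntegral.integral_add_adjacent_intervals (hint (-b) 0) (hint 0 b), heven,
    ← intervalIntegral.integral_add_adjacent_intervals (hint 0 c) (hint c b), hramp, hplateau]
  ring

section AddCircleNorm

variable {p : ℝ}

lemma addCircle_coe_sub_intCast_mul_period (x : ℝ) (n : ℤ) :
    ((x - n * p : ℝ) : AddCircle p) = x := by
  rw [← zsmul_eq_mul, AddCircle.coe_sub, AddCircle.coe_zsmul, AddCircle.coe_period, smul_zero,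
    sub_zero]

lemma exists_coe_eq_and_abs_eq_addCircle_norm (x : AddCircle p) :
    ∃ a : ℝ, (a : AddCircle p) = x ∧ |a| = ‖x‖ := by
  obtain ⟨a, rfl⟩ := QuotientAddGroup.mk_surjective x
  exact ⟨a - round (p⁻¹ * a) * p, addCircle_coe_sub_intCast_mul_period a _,
    (AddCircle.norm_eq p).symm⟩

lemma addCircle_abs_norm_sub_norm_eq_min (x y : AddCircle p) :
    |‖x‖ - ‖y‖| = min ‖x + y‖ ‖x - y‖ := by
  apply le_antisymm
  · exact le_min (by simpa using abs_norm_sub_norm_le x (-y)) (abs_norm_sub_norm_le x y)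
  · obtain ⟨a, rfl, ha⟩ := exists_coe_eq_and_abs_eq_addCircle_norm x
    obtain ⟨b, rfl, hb⟩ := exists_coe_eq_and_abs_eq_addCircle_norm y
    rw [← ha, ← hb, abs_abs_sub_abs_eq_min]
    exact min_le_min QuotientAddGroup.norm_mk_le_norm QuotientAddGroup.norm_mk_le_norm

lemma addCircle_norm_coe_eq_abs {x : ℝ} (hx : |x| ≤ p / 2) : ‖(x : AddCircle p)‖ = |x| := by
  have hp : 0 ≤ p := by linarith [abs_nonneg x]
  obtain rfl | hp := hp.eq_or_lt
  · exact AddCircle.norm_eq_of_zero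
  · rwa [AddCircle.norm_coe_eq_abs_iff p hp.ne', abs_of_pos hp]

lemma addCircle_norm_coe_of_mem_Icc {x : ℝ} (hx : x ∈ Set.Icc 0 p) :
    ‖(x : AddCircle p)‖ = p / 2 - |x - p / 2| := by
  obtain ⟨hx0, hxp⟩ := hx
  obtain hle | hge := le_total x (p / 2)
  · rw [addCircle_norm_coe_eq_abs (by rwa [abs_of_nonneg hx0]), abs_of_nonneg hx0,
      abs_of_nonpos (by linarith)]
    ring
  · have habs : |x - p| = p - x := by rw [abs_of_nonpos (by linarith), neg_sub]
    have hshift : ((x - p : ℝ) : AddCircle p) = x := by simp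
    rw [← hshift, addCircle_norm_coe_eq_abs (by linarith), habs, abs_of_nonneg (by linarith)]
    ring

lemma addCircle_norm_coe_eq_half_sub_abs (hp : 0 < p) (x : ℝ) :
    ‖(x : AddCircle p)‖ = p / 2 - |x - (⌊x / p⌋ * p + p / 2)| := by
  have hmem : x - ⌊x / p⌋ * p ∈ Set.Icc 0 p :=
    ⟨Int.sub_floor_div_mul_nonneg x hp, (Int.sub_floor_div_mul_lt x hp).le⟩
  rw [← addCircle_coe_sub_intCast_mul_period x ⌊x / p⌋, addCircle_norm_coe_of_mem_Icc hmem, sub_sub]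

end AddCircleNorm

section AddCircleIntegral

variable {p : ℝ} [Fact (0 < p)]

lemma addCircle_integral_min_norm {c : ℝ} (hc : 0 ≤ c) (hcp : c ≤ p / 2) :
    ∫ x : AddCircle p, min ‖x‖ c = c * (p - c) := by
  calc ∫ x : AddCircle p, min ‖x‖ c
    _ = ∫ x in -(p / 2)..p / 2, min ‖(x : AddCircle p)‖ c := by
      rw [← AddCircle.intervalIntegral_preimage p (-(p / 2)), show -(p / 2) + p = p / 2 by ring]
    _ = ∫ x in -(p / 2)..p / 2, min |x| c := by
      refine intervalIntegral.integral_congr fun x hx ↦ ?_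
      rw [Set.uIcc_of_le (by linarith)] at hx
      simp only [addCircle_norm_coe_eq_abs (abs_le.2 hx)]
    _ = c * (p - c) := by
      rw [integral_min_abs hc hcp]
      ring

lemma addCircle_integral_abs_norm_add_sub_norm (z : AddCircle p) :
    ∫ x : AddCircle p, |‖z + x‖ - ‖x‖| = ‖z‖ * (p - ‖z‖) := by
  have hp : 0 < p := Fact.out
  have hz : ‖z‖ ≤ p / 2 := by
    simpa [abs_of_pos hp] using AddCircle.norm_le_half_period p hp.ne' (x := z)
  calc ∫ x : AddCircle p, |‖z + x‖ - ‖x‖|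
    _ = ∫ x : AddCircle p, min ‖z + 2 • x‖ ‖z‖ := by
      simp only [addCircle_abs_norm_sub_norm_eq_min, add_assoc, two_nsmul, add_sub_cancel_right]
    _ = ∫ x : AddCircle p, min ‖z + x‖ ‖z‖ :=
      integral_comp_of_measurePreserving (f := fun x : AddCircle p ↦ min ‖z + x‖ ‖z‖)
        (AddCircle.ergodic_nsmul one_lt_two).toMeasurePreserving
        (Continuous.aestronglyMeasurable (by fun_prop))
    _ = ∫ x : AddCircle p, min ‖x‖ ‖z‖ :=
      integral_add_left_eq_self (fun x : AddCircle p ↦ min ‖x‖ ‖z‖) z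
    _ = ‖z‖ * (p - ‖z‖) := addCircle_integral_min_norm (norm_nonneg z) hz

end AddCircleIntegral

lemma sawtooth_eq_norm (t : ℕ) (x : ℝ) : sawtooth t x = ‖(x : AddCircle ((2 : ℝ) ^ (t + 1)))‖ := by
  have hhalf : (2 : ℝ) ^ (t + 1) / 2 = 2 ^ t := by
    rw [pow_succ, mul_div_cancel_right₀ _ two_ne_zero]
  rw [addCircle_norm_coe_eq_half_sub_abs (by positivity), hhalf, sawtooth]

lemma sawtooth_mul_sub_sawtooth {t : ℕ} {z : ℝ} (hz : z ∈ Set.Icc (0 : ℝ) (2 ^ (t + 1))) :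
    sawtooth t z * (2 ^ (t + 1) - sawtooth t z) = z * (2 ^ (t + 1) - z) := by
  rw [sawtooth_eq_norm, addCircle_norm_coe_of_mem_Icc hz]
  linear_combination -(sq_abs (z - 2 ^ (t + 1) / 2))

theorem sawtooth_shift_integral_general (t : ℕ) (z : ℝ) :
    ∫ α in (0:ℝ)..1, |sawtooth t (z + α * 2 ^ (t + 1)) - sawtooth t (α * 2 ^ (t + 1))|
      = (2 ^ (t + 1) - sawtooth t z) * sawtooth t z / 2 ^ (t + 1) := by
  have : Fact ((0 : ℝ) < 2 ^ (t + 1)) := ⟨by positivity⟩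
  have hperiod : ∫ x in (0 : ℝ)..2 ^ (t + 1), |sawtooth t (z + x) - sawtooth t x|
      = sawtooth t z * (2 ^ (t + 1) - sawtooth t z) := by
    simp only [sawtooth_eq_norm, AddCircle.coe_add]
    rw [← addCircle_integral_abs_norm_add_sub_norm, ← AddCircle.intervalIntegral_preimage _ 0,
      zero_add]
  rw [intervalIntegral.integral_comp_mul_right (fun x ↦ |sawtooth t (z + x) - sawtooth t x|)
    (by positivity), zero_mul, one_mul, hperiod, smul_eq_mul, inv_mul_eq_div, mul_comm]

/-- For `z ∈ [0, 2^{t+1}]`,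
`∫₀¹ |g_t(z + α·2^{t+1}) - g_t(α·2^{t+1})| dα = (2^{t+1} - z)·z / 2^{t+1}`. -/
theorem sawtooth_shift_integral (t : ℕ) (z : ℝ) (hz : z ∈ Set.Icc (0:ℝ) (2 ^ (t + 1))) :
    ∫ α in (0:ℝ)..1, |sawtooth t (z + α * 2 ^ (t + 1)) - sawtooth t (α * 2 ^ (t + 1))|
      = (2 ^ (t + 1) - z) * z / 2 ^ (t + 1) := by
  rw [sawtooth_shift_integral_general, mul_comm, sawtooth_mul_sub_sawtooth hz, mul_comm]
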